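/- Let τ be a shift-continuous T₁ topology on the bicyclic monoid C(p,q). If there exists a point q^i p^j ∈ C(p,q) such that the subspace ↓≼ q^i p^j is semiregular at q^i p^j, then for every point q^m p^n ∈ C(p,q) the subspace ↓≼ q^m p^n is semiregular at q^m p^n. -/

import Mathlib

/-- The bicyclic monoid `C(p,q)` modeled on `ℕ × ℕ`, where `(k, l)` represents `q^k p^l`:
`(k,l)·(m,n) = (k + (m ∸ l), n + (l ∸ m))`. -/
def bmul (a b : ℕ × ℕ) : ℕ × ℕ := (a.1 + (b.1 - a.2), b.2 + (a.2 - b.1))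

/-- The natural partial order on the bicyclic monoid: `x ≼ y` iff `x = y·e`
for some idempotent `e`. -/
def bLe (x y : ℕ × ℕ) : Prop := ∃ e : ℕ × ℕ, bmul e e = e ∧ x = bmul y e

/-- `↓≼ x`, the down-set of `x` with respect to the natural partial order. -/
def bDown (x : ℕ × ℕ) : Set (ℕ × ℕ) := {y | bLe y x}

lemma self_mem_bDown (i j : ℕ) : ((i, j) : ℕ × ℕ) ∈ bDown (i, j) :=
  ⟨(j, j), by simp [bmul], by simp [bmul]⟩

/-- The subspace topology on a subset `Y` of the bicyclic monoid. -/
def subT (τ : TopologicalSpace (ℕ × ℕ)) (Y : Set (ℕ × ℕ)) : TopologicalSpace Y :=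
  TopologicalSpace.induced Subtype.val τ

/-- A space is semiregular at a point `x` if there is a neighbourhood basis at `x`
consisting of regular open sets, i.e. sets `U` with `U = int(cl(U))`. -/
def SemiregularAt {X : Type*} (t : TopologicalSpace X) (x : X) : Prop :=
  ∃ B : Set (Set X),
    (∀ U ∈ B, U = @interior X t (@closure X t U)) ∧
    (∀ U ∈ B, x ∈ U) ∧
    (∀ S : Set X, @IsOpen X t S → x ∈ S → ∃ U ∈ B, U ⊆ S)

/-!
Every element below `q^i p^j` is `q^(i+k) p^(j+k)` for some `k`, and the two-sided translation
`x ↦ q^m p^i · x · q^j p^n` sends it to `q^(m+k) p^(n+k)`. Hence any two principal down-sets are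
homeomorphic by a map taking greatest element to greatest element.
-/

theorem SemiregularAt.map_homeomorph {X Y : Type*} [tX : TopologicalSpace X]
    [tY : TopologicalSpace Y] (e : X ≃ₜ Y) {x : X} (h : SemiregularAt tX x) :
    SemiregularAt tY (e x) := by
  obtain ⟨B, regular, mem, basis⟩ := h
  refine ⟨Set.image e '' B, ?_, ?_, ?_⟩
  · rintro _ ⟨U, hU, rfl⟩
    rw [← e.image_closure, ← e.image_interior, ← regular U hU]
  · rintro _ ⟨U, hU, rfl⟩
    exact Set.mem_image_of_mem e (mem U hU)
  · intro S hS hxS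
    obtain ⟨U, hU, hUS⟩ := basis (e ⁻¹' S) (hS.preimage e.continuous) hxS
    exact ⟨e '' U, Set.mem_image_of_mem _ hU, Set.image_subset_iff.2 hUS⟩

theorem bmul_self_eq_iff {e : ℕ × ℕ} : bmul e e = e ↔ e.1 = e.2 := by
  simp only [bmul, Prod.ext_iff]
  omega

theorem bmul_diag (a : ℕ × ℕ) (l : ℕ) : bmul a (l, l) = a + (l - a.2, l - a.2) := by
  simp only [bmul, Prod.ext_iff, Prod.fst_add, Prod.snd_add, true_and]
  omega

theorem mem_bDown_iff {a x : ℕ × ℕ} : x ∈ bDown a ↔ ∃ k, x = a + (k, k) := by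
  constructor
  · rintro ⟨⟨l, l'⟩, idem, rfl⟩
    obtain rfl : l = l' := bmul_self_eq_iff.1 idem
    exact ⟨l - a.2, bmul_diag a l⟩
  · rintro ⟨k, rfl⟩
    refine ⟨(a.2 + k, a.2 + k), bmul_self_eq_iff.2 rfl, ?_⟩
    rw [bmul_diag, Nat.add_sub_cancel_left]

/-- The two-sided translation `x ↦ q^m p^i · x · q^j p^n` attached to the points `a = q^i p^j` and
`b = q^m p^n`; it carries `↓≼ a` onto `↓≼ b`. -/
def bTranslate (a b x : ℕ × ℕ) : ℕ × ℕ := bmul (bmul (b.1, a.1) x) (a.2, b.2)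

theorem bTranslate_add_diag (a b : ℕ × ℕ) (k : ℕ) :
    bTranslate a b (a + (k, k)) = b + (k, k) := by
  simp only [bTranslate, bmul, Prod.ext_iff, Prod.fst_add, Prod.snd_add]
  omega

theorem bTranslate_self (a b : ℕ × ℕ) : bTranslate a b a = b :=
  bTranslate_add_diag a b 0

theorem mapsTo_bTranslate (a b : ℕ × ℕ) : Set.MapsTo (bTranslate a b) (bDown a) (bDown b) := by
  intro x hx
  obtain ⟨k, rfl⟩ := mem_bDown_iff.1 hx
  exact mem_bDown_iff.2 ⟨k, bTranslate_add_diag a b k⟩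

theorem leftInvOn_bTranslate (a b : ℕ × ℕ) :
    Set.LeftInvOn (bTranslate b a) (bTranslate a b) (bDown a) := by
  intro x hx
  obtain ⟨k, rfl⟩ := mem_bDown_iff.1 hx
  rw [bTranslate_add_diag, bTranslate_add_diag]

section ShiftContinuous

variable [τ : TopologicalSpace (ℕ × ℕ)]
  (hleft : ∀ a : ℕ × ℕ, Continuous fun x => bmul a x)
  (hright : ∀ a : ℕ × ℕ, Continuous fun x => bmul x a)

include hleft hright

theorem continuous_bTranslate (a b : ℕ × ℕ) : Continuous (bTranslate a b) :=
  (hright (a.2, b.2)).comp (hleft (b.1, a.1))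

/-- The homeomorphism `↓≼ a ≃ₜ ↓≼ b` given by two-sided translation, for a shift-continuous
topology on the bicyclic monoid. -/
def bDownHomeomorph (a b : ℕ × ℕ) : bDown a ≃ₜ bDown b where
  toFun := (mapsTo_bTranslate a b).restrict
  invFun := (mapsTo_bTranslate b a).restrict
  left_inv x := Subtype.ext (leftInvOn_bTranslate a b x.2)
  right_inv x := Subtype.ext (leftInvOn_bTranslate b a x.2)
  continuous_toFun := (continuous_bTranslate hleft hright a b).restrict (mapsTo_bTranslate a b)
  continuous_invFun := (continuous_bTranslate hleft hright b a).restrict (mapsTo_bTranslate b a)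

end ShiftContinuous

theorem stmt15_general (τ : TopologicalSpace (ℕ × ℕ))
    (hleft : ∀ a : ℕ × ℕ, @Continuous (ℕ × ℕ) (ℕ × ℕ) τ τ (fun x => bmul a x))
    (hright : ∀ a : ℕ × ℕ, @Continuous (ℕ × ℕ) (ℕ × ℕ) τ τ (fun x => bmul x a))
    (i j : ℕ)
    (hsr : SemiregularAt (subT τ (bDown (i, j))) ⟨(i, j), self_mem_bDown i j⟩) (m n : ℕ) :
    SemiregularAt (subT τ (bDown (m, n))) ⟨(m, n), self_mem_bDown m n⟩ := by
  let e : bDown (i, j) ≃ₜ bDown (m, n) := bDownHomeomorph hleft hright (i, j) (m, n)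
  have e_top : e ⟨(i, j), self_mem_bDown i j⟩ = ⟨(m, n), self_mem_bDown m n⟩ :=
    Subtype.ext (bTranslate_self (i, j) (m, n))
  exact e_top ▸ hsr.map_homeomorph e

/-- Lemma 5: let `τ` be a shift-continuous `T₁` topology on `C(p,q)`. If the subspace
`↓≼ q^i p^j` is semiregular at `q^i p^j` for some point `q^i p^j`, then for every point
`q^m p^n` the subspace `↓≼ q^m p^n` is semiregular at `q^m p^n`. -/
theorem stmt15 (τ : TopologicalSpace (ℕ × ℕ))
    (hT1 : @T1Space (ℕ × ℕ) τ)
    (hleft : ∀ a : ℕ × ℕ, @Continuous (ℕ × ℕ) (ℕ × ℕ) τ τ (fun x => bmul a x))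
    (hright : ∀ a : ℕ × ℕ, @Continuous (ℕ × ℕ) (ℕ × ℕ) τ τ (fun x => bmul x a))
    (i j : ℕ)
    (hsr : SemiregularAt (subT τ (bDown (i, j))) ⟨(i, j), self_mem_bDown i j⟩) :
    ∀ m n : ℕ, SemiregularAt (subT τ (bDown (m, n))) ⟨(m, n), self_mem_bDown m n⟩ :=
  stmt15_general τ hleft hright i j hsr
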